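/- Microgrid output agreement with optimal dispatch under generator failures. Suppose a proper subset V_F ⊊ V_G of generators fails: for i ∈ V_F the input u_i is frozen at an unknown constant, which is absorbed into δ_i, so these nodes obey M_i ω̇_i = −A_i ω_i − (BΓ sin(η))_i + δ_i, while all other equations are unchanged. Let q_i > 0 for i ∈ V_c := (V_G ∖ V_F) ∪ V_I, set λ = −(Σ_{i∈V_c} q_i^{-1})^{-1} Σ_{i=1}^N δ_i and ū_i = q_i^{-1}λ for i ∈ V_c. Assume there exists η̄ ∈ (−π/2, π/2)^M such that 0 = −(BΓ sin(η̄))_i + ū_i + δ_i for every i ∈ V_c and 0 = −(BΓ sin(η̄))_i + δ_i for every i ∈ V_F ∪ V_L. Then the distributed controller ξ̇_i = Σ_{\{i,j\}∈E_c}(ξ_j − ξ_i) − q_i^{-1}ω_i, u_i = q_i^{-1}ξ_i (i ∈ V_c), over a connected undirected communication graph G_c on V_c, achieves, for all closed-loop solutions starting in a suitable open set of initial conditions around (ω = 0, η = η̄, ξ = (λ,…,λ)): ω_i(t) → 0 as t → ∞ for every node i, and u_i(t) → ū_i as t → ∞ for every i ∈ V_c. -/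

import Mathlib

open Matrix Filter Topology Set Real

/-!
The kinetic energy, the Bregman divergence of the line potential `-∑ Γₖ cos ηₖ` and the squared
distance of the controller states from agreement add up to a Lyapunov function, which decays at the
rate `ωᵀ A ω + xᵀ L x` with `x = ξ - ξbar` and `L` the communication Laplacian. Strict concavity of
`cos` on `[-π/2, π/2]` makes the divergence positive on a small sphere around `ηbar`, so solutions
of small energy never leave the box `(-π/2, π/2)^M` and are bounded. Barbalat's lemma, applied to
the energy, gives `ω → 0` and asymptotic agreement of the controllers; applied to the momenta, it
shows that the power imbalance at each bus tends to zero. Line flows cancel in the sum of the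
imbalances over all buses, and what remains determines the common limit of the controller states.
-/

section Asymptotics

variable {E F : Type*} [NormedAddCommGroup E] [NormedSpace ℝ E] {a : ℝ}

/-- Barbalat's lemma. -/
theorem tendsto_zero_of_hasDerivWithinAt_of_uniformContinuousOn {f g : ℝ → E} {l : E}
    (hf : ∀ t ∈ Ici a, HasDerivWithinAt f (g t) (Ici a) t) (hg : UniformContinuousOn g (Ici a))
    (hl : Tendsto f atTop (𝓝 l)) : Tendsto g atTop (𝓝 0) := by
  rw [Metric.tendsto_atTop]
  intro ε hε
  obtain ⟨δ, hδ, hgδ⟩ := Metric.uniformContinuousOn_iff_le.1 hg (ε / 2) (half_pos hε)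
  have hincr : Tendsto (fun t => f (t + δ) - f t) atTop (𝓝 0) := by
    simpa using (hl.comp (tendsto_atTop_add_const_right atTop δ tendsto_id)).sub hl
  obtain ⟨T, hT⟩ := Metric.tendsto_atTop.1 hincr (ε / 2 * δ) (by positivity)
  refine ⟨max T a, fun t ht => ?_⟩
  have hsub : Icc t (t + δ) ⊆ Ici a := fun s hs => (le_of_max_le_right ht).trans hs.1
  have hlin : ‖(f (t + δ) - (t + δ) • g t) - (f t - t • g t)‖ ≤ ε / 2 * ‖t + δ - t‖ := by
    refine (convex_Icc t (t + δ)).norm_image_sub_le_of_norm_hasDerivWithin_le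
      (f := fun s => f s - s • g t) (f' := fun s => g s - g t) (fun s hs => ?_) (fun s hs => ?_)
      (left_mem_Icc.2 (by linarith)) (right_mem_Icc.2 (by linarith))
    · simpa using ((hf s (hsub hs)).mono hsub).fun_sub
        ((hasDerivWithinAt_id s _).smul_const (g t))
    · rw [← dist_eq_norm]
      refine hgδ s (hsub hs) t (le_of_max_le_right ht) ?_
      rw [Real.dist_eq, abs_of_nonneg] <;> linarith [hs.1, hs.2]
  have hsmul : δ • g t = (f (t + δ) - f t)
      - ((f (t + δ) - (t + δ) • g t) - (f t - t • g t)) := by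
    module
  have hlt : δ * ‖g t‖ < δ * ε := by
    calc δ * ‖g t‖ = ‖δ • g t‖ := by rw [norm_smul, Real.norm_of_nonneg hδ.le]
      _ ≤ ‖f (t + δ) - f t‖ + ‖(f (t + δ) - (t + δ) • g t) - (f t - t • g t)‖ :=
        hsmul ▸ norm_sub_le _ _
      _ < ε / 2 * δ + ε / 2 * δ := by
        refine add_lt_add_of_lt_of_le ?_ ?_
        · simpa using hT t (le_of_max_le_left ht)
        · simpa [abs_of_pos hδ] using hlin
      _ = δ * ε := by ring
  simpa using lt_of_mul_lt_mul_left hlt hδ.le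

theorem antitoneOn_Ici_of_hasDerivWithinAt_neg {V W : ℝ → ℝ}
    (hV : ∀ t ∈ Ici a, HasDerivWithinAt V (-W t) (Ici a) t) (hW : ∀ t ∈ Ici a, 0 ≤ W t) :
    AntitoneOn V (Ici a) := by
  refine antitoneOn_of_hasDerivWithinAt_nonpos (convex_Ici a)
    (fun t ht => (hV t ht).continuousWithinAt) (f' := fun t => -W t) (fun t ht => ?_)
    (fun t ht => neg_nonpos.2 (hW t (interior_subset ht)))
  exact (hV t (interior_subset ht)).mono interior_subset

theorem exists_tendsto_atTop_of_antitoneOn_Ici {V : ℝ → ℝ} (hV : AntitoneOn V (Ici a))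
    (hbdd : BddBelow (V '' Ici a)) : ∃ l, Tendsto V atTop (𝓝 l) := by
  have hanti : Antitone fun t => V (max t a) := fun s t hst =>
    hV (le_max_right s a) (le_max_right t a) (max_le_max_right a hst)
  have hrange : BddBelow (range fun t => V (max t a)) :=
    hbdd.mono (range_subset_iff.2 fun t => mem_image_of_mem V (le_max_right t a))
  refine ⟨_, (tendsto_atTop_ciInf hanti hrange).congr' ?_⟩
  filter_upwards [eventually_ge_atTop a] with t ht
  rw [max_eq_left ht]

theorem tendsto_zero_of_hasDerivWithinAt_neg_of_bddBelow {V W : ℝ → ℝ}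
    (hV : ∀ t ∈ Ici a, HasDerivWithinAt V (-W t) (Ici a) t) (hW : ∀ t ∈ Ici a, 0 ≤ W t)
    (hWc : UniformContinuousOn W (Ici a)) (hbdd : BddBelow (V '' Ici a)) :
    Tendsto W atTop (𝓝 0) := by
  obtain ⟨l, hl⟩ := exists_tendsto_atTop_of_antitoneOn_Ici
    (antitoneOn_Ici_of_hasDerivWithinAt_neg hV hW) hbdd
  simpa using (tendsto_zero_of_hasDerivWithinAt_of_uniformContinuousOn hV
    (_root_.uniformContinuous_neg.comp_uniformContinuousOn hWc) hl).neg

theorem uniformContinuousOn_comp_of_hasDerivWithinAt [ProperSpace E] [UniformSpace F]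
    {x : ℝ → E} {v : E → E} {g : E → F} (hv : Continuous v) (hg : Continuous g)
    (hx : ∀ t ∈ Ici a, HasDerivWithinAt x (v (x t)) (Ici a) t)
    (hb : Bornology.IsBounded (x '' Ici a)) : UniformContinuousOn (fun t => g (x t)) (Ici a) := by
  have hK : IsCompact (closure (x '' Ici a)) := hb.isCompact_closure
  have hmem : MapsTo x (Ici a) (closure (x '' Ici a)) := fun t ht =>
    subset_closure (mem_image_of_mem x ht)
  obtain ⟨C, hC⟩ := hK.exists_bound_of_continuousOn hv.continuousOn
  have hlip : LipschitzOnWith C.toNNReal x (Ici a) :=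
    (convex_Ici a).lipschitzOnWith_of_nnnorm_hasDerivWithin_le hx fun t ht =>
      NNReal.le_toNNReal_of_coe_le (hC _ (hmem ht))
  exact (hK.uniformContinuousOn_of_continuous hg.continuousOn).comp hlip.uniformContinuousOn hmem

theorem tendsto_zero_of_sq_tendsto_zero {ι : Type*} {f : ι → ℝ} {l : Filter ι}
    (h : Tendsto (fun t => f t ^ 2) l (𝓝 0)) : Tendsto f l (𝓝 0) := by
  refine (tendsto_zero_iff_abs_tendsto_zero _).2 ?_
  simpa [Function.comp_def, Real.sqrt_sq_eq_abs] using h.sqrt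

theorem mem_ball_of_isPreconnected_of_forall_notMem_sphere {X α : Type*} [TopologicalSpace X]
    [PseudoMetricSpace α] {s : Set X} (hs : IsPreconnected s) {f : X → α} (hf : ContinuousOn f s)
    {c : α} {r : ℝ} {x₀ : X} (hx₀ : x₀ ∈ s) (hfx₀ : f x₀ ∈ Metric.ball c r)
    (hsphere : ∀ x ∈ s, f x ∉ Metric.sphere c r) {x : X} (hx : x ∈ s) :
    f x ∈ Metric.ball c r := by
  by_contra hout
  obtain ⟨y, hy, hyr⟩ := hs.intermediate_value hx₀ hx
    (f := fun y => dist (f y) c) (by fun_prop)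
    ⟨(Metric.mem_ball.1 hfx₀).le, not_lt.1 (mt Metric.mem_ball.2 hout)⟩
  exact hsphere y hy hyr

end Asymptotics

theorem cos_lt_tangent_line {a x : ℝ} (ha : a ∈ Icc (-(π / 2)) (π / 2))
    (hx : x ∈ Icc (-(π / 2)) (π / 2)) (hne : x ≠ a) : cos x < cos a - sin a * (x - a) := by
  rcases hne.lt_or_gt with h | h
  · have hslope := strictConcaveOn_cos_Icc.lt_slope_of_hasDerivAt hx ha h (hasDerivAt_cos a)
    rw [slope_def_field, lt_div_iff₀ (sub_pos.2 h)] at hslope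
    linarith
  · have hslope := strictConcaveOn_cos_Icc.slope_lt_of_hasDerivAt ha hx h (hasDerivAt_cos a)
    rw [slope_def_field, div_lt_iff₀ (sub_pos.2 h)] at hslope
    linarith

theorem hasDerivWithinAt_mul_sq_div_two {x : ℝ → ℝ} {μ x' t : ℝ} {s : Set ℝ}
    (ht : UniqueDiffWithinAt ℝ s t) (hx : HasDerivWithinAt (fun u => μ * x u) x' s t) :
    HasDerivWithinAt (fun u => μ * x u ^ 2 / 2) (x t * x') s t := by
  rcases eq_or_ne μ 0 with rfl | hμ
  · have hx' : x' = 0 := ht.eq_deriv _ (by simpa using hx) (hasDerivWithinAt_const t _ (0 : ℝ))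
    simpa [hx'] using hasDerivWithinAt_const t s (0 : ℝ)
  · have hsq : (fun u => μ * x u ^ 2 / 2) = fun u => μ⁻¹ * (μ * x u) ^ 2 / 2 := by
      ext u
      field_simp
    rw [hsq]
    exact (((hx.fun_pow 2).const_mul μ⁻¹).div_const 2).congr_deriv (by
      simp only [Nat.cast_ofNat, Nat.add_one_sub_one, pow_one]
      field_simp)

section Consensus

variable {c ι : Type*} [Fintype c]

section Laplacian

variable [DecidableEq c] (G : SimpleGraph c) [DecidableRel G.Adj]

theorem lapMatrix_mulVec_const (r : ℝ) : G.lapMatrix ℝ *ᵥ (fun _ => r) = 0 := by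
  have h : (fun _ : c => r) = r • fun _ => (1 : ℝ) := by ext; simp
  rw [h, mulVec_smul, G.lapMatrix_mulVec_const_eq_zero, smul_zero]

theorem neg_lapMatrix_mulVec_apply (x : c → ℝ) (i : c) :
    -(G.lapMatrix ℝ *ᵥ x) i = ∑ j, if G.Adj i j then x j - x i else 0 := by
  simp [SimpleGraph.lapMatrix_mulVec_apply, ← Finset.sum_filter,
    ← SimpleGraph.neighborFinset_eq_filter]

variable {G}

theorem sq_sub_le_dotProduct_lapMatrix_mulVec (x : c → ℝ) {i j : c} (hij : G.Adj i j) :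
    (x i - x j) ^ 2 ≤ 2 * (x ⬝ᵥ (G.lapMatrix ℝ *ᵥ x)) := by
  have hterm : ∀ k l, 0 ≤ if G.Adj k l then (x k - x l) ^ 2 else 0 := fun k l => by positivity
  calc (x i - x j) ^ 2 = if G.Adj i j then (x i - x j) ^ 2 else 0 := (if_pos hij).symm
    _ ≤ ∑ l, if G.Adj i l then (x i - x l) ^ 2 else 0 :=
      Finset.single_le_sum (f := fun l => if G.Adj i l then (x i - x l) ^ 2 else 0)
        (fun l _ => hterm i l) (Finset.mem_univ j)
    _ ≤ ∑ k, ∑ l, if G.Adj k l then (x k - x l) ^ 2 else 0 :=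
      Finset.single_le_sum (f := fun k => ∑ l, if G.Adj k l then (x k - x l) ^ 2 else 0)
        (fun k _ => Finset.sum_nonneg fun l _ => hterm k l) (Finset.mem_univ i)
    _ = 2 * (x ⬝ᵥ (G.lapMatrix ℝ *ᵥ x)) := by
      rw [← toLinearMap₂'_apply', SimpleGraph.lapMatrix_toLinearMap₂']
      ring

theorem dotProduct_lapMatrix_mulVec_nonneg (x : c → ℝ) : 0 ≤ x ⬝ᵥ (G.lapMatrix ℝ *ᵥ x) := by
  simpa using (G.posSemidef_lapMatrix ℝ).dotProduct_mulVec_nonneg x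

theorem tendsto_sub_of_tendsto_dotProduct_lapMatrix_mulVec (hG : G.Preconnected)
    {x : ι → c → ℝ} {l : Filter ι}
    (h : Tendsto (fun t => x t ⬝ᵥ (G.lapMatrix ℝ *ᵥ x t)) l (𝓝 0)) (i j : c) :
    Tendsto (fun t => x t i - x t j) l (𝓝 0) := by
  obtain ⟨p⟩ := hG i j
  induction p with
  | nil => simpa using tendsto_const_nhds
  | cons hadj _ ih =>
    have hedge := squeeze_zero (fun t => sq_nonneg _)
      (fun t => sq_sub_le_dotProduct_lapMatrix_mulVec (x t) hadj) (by simpa using h.const_mul 2)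
    simpa using (tendsto_zero_of_sq_tendsto_zero hedge).add ih

end Laplacian

theorem tendsto_zero_of_tendsto_sub_of_tendsto_dotProduct {w : c → ℝ} (hw : ∑ i, w i ≠ 0)
    {x : ι → c → ℝ} {l : Filter ι} (hsub : ∀ i j, Tendsto (fun t => x t i - x t j) l (𝓝 0))
    (hdot : Tendsto (fun t => w ⬝ᵥ x t) l (𝓝 0)) : Tendsto x l (𝓝 0) := by
  refine tendsto_pi_nhds.2 fun j => ?_
  have hmean : Tendsto (fun t => (∑ i, w i)⁻¹ * (w ⬝ᵥ x t - ∑ i, w i * (x t i - x t j))) l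
      (𝓝 0) := by
    simpa using (hdot.sub (tendsto_finsetSum _ fun i _ => (hsub i j).const_mul (w i))).const_mul _
  refine hmean.congr fun t => ?_
  simp only [dotProduct, mul_sub, Finset.sum_sub_distrib, ← Finset.sum_mul]
  field_simp
  ring

end Consensus

/-- Data of a network-preserving microgrid with buses `n`, lines `m` and controllers `c`. Buses with
`inertia i = 0` are the algebraic ones (inverters and loads), so that every bus obeys the single
equation `inertia i * ω̇ᵢ = imbalanceᵢ`. The `input` matrix maps controller states to power
injections; `comm` is the communication graph of the controllers. -/
structure Microgrid (n m c : Type*) where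
  incidence : Matrix n m ℝ
  lineGain : m → ℝ
  inertia : n → ℝ
  damping : n → ℝ
  load : n → ℝ
  input : Matrix n c ℝ
  comm : SimpleGraph c

namespace Microgrid

variable {n m c : Type*} (P : Microgrid n m c)

/-- The power flow `Γ sin(η)` along the lines. -/
noncomputable def lineFlow (η : m → ℝ) : m → ℝ := fun k => P.lineGain k * sin (η k)

section Potential

variable [Fintype m]

/-- The potential energy of the lines relative to `ηbar`: the Bregman divergence of
`η ↦ -∑ Γₖ cos ηₖ`. -/
noncomputable def potential (ηbar η : m → ℝ) : ℝ :=
  ∑ k, P.lineGain k * (cos (ηbar k) - cos (η k) - sin (ηbar k) * (η k - ηbar k))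

theorem potential_self (ηbar : m → ℝ) : P.potential ηbar ηbar = 0 := by
  simp [potential]

theorem continuous_potential (ηbar : m → ℝ) : Continuous (P.potential ηbar) := by
  unfold potential
  fun_prop

variable {P} {ηbar η : m → ℝ}

theorem potential_pos (hΓ : ∀ k, 0 < P.lineGain k) (hηbar : ∀ k, ηbar k ∈ Ioo (-(π / 2)) (π / 2))
    (hη : ∀ k, η k ∈ Ioo (-(π / 2)) (π / 2)) (hne : η ≠ ηbar) : 0 < P.potential ηbar η := by
  have hterm : ∀ k, η k ≠ ηbar k →
      0 < P.lineGain k * (cos (ηbar k) - cos (η k) - sin (ηbar k) * (η k - ηbar k)) :=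
    fun k hk => mul_pos (hΓ k) <| by
      linarith [cos_lt_tangent_line (Ioo_subset_Icc_self (hηbar k)) (Ioo_subset_Icc_self (hη k)) hk]
  obtain ⟨k, hk⟩ := Function.ne_iff.1 hne
  refine Finset.sum_pos' (fun l _ => ?_) ⟨k, Finset.mem_univ k, hterm k hk⟩
  rcases eq_or_ne (η l) (ηbar l) with h | h
  · simp [h]
  · exact (hterm l h).le

theorem potential_nonneg (hΓ : ∀ k, 0 < P.lineGain k)
    (hηbar : ∀ k, ηbar k ∈ Ioo (-(π / 2)) (π / 2)) (hη : ∀ k, η k ∈ Ioo (-(π / 2)) (π / 2)) :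
    0 ≤ P.potential ηbar η := by
  rcases eq_or_ne η ηbar with rfl | hne
  · exact (P.potential_self η).ge
  · exact (potential_pos hΓ hηbar hη hne).le

theorem exists_potential_barrier (hΓ : ∀ k, 0 < P.lineGain k)
    (hηbar : ∀ k, ηbar k ∈ Ioo (-(π / 2)) (π / 2)) :
    ∃ r > 0, ∃ e > 0, (∀ η ∈ Metric.ball ηbar r, ∀ k, η k ∈ Ioo (-(π / 2)) (π / 2)) ∧
      ∀ η ∈ Metric.sphere ηbar r, e ≤ P.potential ηbar η := by
  have hbox : univ.pi (fun _ : m => Ioo (-(π / 2)) (π / 2)) ∈ 𝓝 ηbar :=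
    (isOpen_set_pi finite_univ fun _ _ => isOpen_Ioo).mem_nhds fun k _ => hηbar k
  obtain ⟨r, hr, hsub⟩ := Metric.nhds_basis_closedBall.mem_iff.1 hbox
  obtain ⟨e, he, hmin⟩ := (isCompact_sphere ηbar r).exists_forall_le'
    (P.continuous_potential ηbar).continuousOn fun η hη =>
      potential_pos hΓ hηbar (fun k => hsub (Metric.sphere_subset_closedBall hη) k (mem_univ k))
        (Metric.ne_of_mem_sphere hη hr.ne')
  exact ⟨r, hr, e, he, fun η hη k => hsub (Metric.ball_subset_closedBall hη) k (mem_univ k), hmin⟩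

theorem hasDerivWithinAt_potential (ηbar : m → ℝ) {η : ℝ → m → ℝ} {η' : m → ℝ} {s : Set ℝ} {t : ℝ}
    (hη : HasDerivWithinAt η η' s t) : HasDerivWithinAt (fun u => P.potential ηbar (η u))
      ((P.lineFlow (η t) - P.lineFlow ηbar) ⬝ᵥ η') s t := by
  refine HasDerivWithinAt.fun_sum fun k _ => ?_
  have hk := hasDerivWithinAt_pi.1 hη k
  refine (((hk.cos.const_sub (cos (ηbar k))).fun_sub
    ((hk.sub_const (ηbar k)).const_mul (sin (ηbar k)))).const_mul (P.lineGain k)).congr_deriv ?_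
  simp only [lineFlow, Pi.sub_apply]
  ring

end Potential

section Energy

variable [Fintype n] [Fintype m] [Fintype c]

/-- The incremental energy with respect to the equilibrium `(0, ηbar, ξbar)`: kinetic, potential and
controller parts. It is the Lyapunov function of the closed loop. -/
noncomputable def energy (ηbar : m → ℝ) (ξbar : c → ℝ) (ω : n → ℝ) (η : m → ℝ) (ξ : c → ℝ) : ℝ :=
  ∑ i, P.inertia i * ω i ^ 2 / 2 + P.potential ηbar η + ∑ j, (ξ j - ξbar j) ^ 2 / 2

theorem energy_self (ηbar : m → ℝ) (ξbar : c → ℝ) : P.energy ηbar ξbar 0 ηbar ξbar = 0 := by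
  simp [energy, potential_self]

theorem continuous_energy (ηbar : m → ℝ) (ξbar : c → ℝ) :
    Continuous fun z : (n → ℝ) × (m → ℝ) × (c → ℝ) => P.energy ηbar ξbar z.1 z.2.1 z.2.2 := by
  have := P.continuous_potential ηbar
  unfold energy
  fun_prop

variable {P}

section Bounds

variable (hM : ∀ i, 0 ≤ P.inertia i) (ηbar : m → ℝ) (ξbar : c → ℝ) (ω : n → ℝ) (η : m → ℝ)
  (ξ : c → ℝ)
include hM

theorem potential_le_energy : P.potential ηbar η ≤ P.energy ηbar ξbar ω η ξ := by
  have hkin : 0 ≤ ∑ i, P.inertia i * ω i ^ 2 / 2 :=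
    Finset.sum_nonneg fun i _ => by have := hM i; positivity
  have hctrl : 0 ≤ ∑ j, (ξ j - ξbar j) ^ 2 / 2 := by positivity
  unfold energy
  linarith

variable {η} (hpot : 0 ≤ P.potential ηbar η)
include hpot

theorem inertia_mul_sq_le_energy (i : n) :
    P.inertia i * ω i ^ 2 ≤ 2 * P.energy ηbar ξbar ω η ξ := by
  have hkin := Finset.single_le_sum (f := fun i => P.inertia i * ω i ^ 2 / 2)
    (fun i _ => by have := hM i; positivity) (Finset.mem_univ i)
  have hctrl : 0 ≤ ∑ j, (ξ j - ξbar j) ^ 2 / 2 := by positivity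
  unfold energy
  linarith

theorem sq_sub_le_energy (j : c) : (ξ j - ξbar j) ^ 2 ≤ 2 * P.energy ηbar ξbar ω η ξ := by
  have hkin : 0 ≤ ∑ i, P.inertia i * ω i ^ 2 / 2 :=
    Finset.sum_nonneg fun i _ => by have := hM i; positivity
  have hctrl := Finset.single_le_sum (f := fun j => (ξ j - ξbar j) ^ 2 / 2)
    (fun j _ => by positivity) (Finset.mem_univ j)
  unfold energy
  linarith

end Bounds

end Energy

section Dynamics

variable [Fintype m] [Fintype c]

/-- The right-hand side `-A ω - B Γ sin(η) + u + δ` of the bus equations, with `u = input *ᵥ ξ`. -/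
noncomputable def imbalance (ω : n → ℝ) (η : m → ℝ) (ξ : c → ℝ) : n → ℝ :=
  -(P.damping * ω) - P.incidence *ᵥ P.lineFlow η + P.input *ᵥ ξ + P.load

theorem continuous_imbalance :
    Continuous fun z : (n → ℝ) × (m → ℝ) × (c → ℝ) => P.imbalance z.1 z.2.1 z.2.2 := by
  unfold imbalance lineFlow
  fun_prop

theorem imbalance_apply_eq_add_imbalance_zero (ω : n → ℝ) (η : m → ℝ) (ξ : c → ℝ)
    (i : n) : P.imbalance ω η ξ i = -(P.damping i * ω i) + P.imbalance 0 η ξ i := by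
  simp only [imbalance, Pi.add_apply, Pi.sub_apply, Pi.neg_apply, Pi.mul_apply, Pi.zero_apply,
    mul_zero, neg_zero]
  ring

variable [DecidableEq c] [DecidableRel P.comm.Adj]

/-- `(ω, η, ξ) = (0, ηbar, ξbar)` is an equilibrium of the closed loop in which the controllers
agree. -/
structure IsEquilibrium (ηbar : m → ℝ) (ξbar : c → ℝ) : Prop where
  imbalance_eq_zero : P.imbalance 0 ηbar ξbar = 0
  lapMatrix_mulVec_eq_zero : P.comm.lapMatrix ℝ *ᵥ ξbar = 0

variable {P} {ηbar : m → ℝ} {ξbar : c → ℝ}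

theorem IsEquilibrium.imbalance_eq (h : P.IsEquilibrium ηbar ξbar) (ω : n → ℝ) (η : m → ℝ)
    (ξ : c → ℝ) : P.imbalance ω η ξ = -(P.damping * ω)
      - P.incidence *ᵥ (P.lineFlow η - P.lineFlow ηbar) + P.input *ᵥ (ξ - ξbar) := by
  rw [← sub_zero (P.imbalance ω η ξ), ← h.imbalance_eq_zero]
  simp only [imbalance, mulVec_sub, mul_zero]
  abel

variable [Fintype n]

theorem IsEquilibrium.sum_imbalance (h : P.IsEquilibrium ηbar ξbar)
    (hB : 1 ᵥ* P.incidence = 0) (ω : n → ℝ) (η : m → ℝ) (ξ : c → ℝ) :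
    ∑ i, P.imbalance ω η ξ i =
      -∑ i, P.damping i * ω i + (1 ᵥ* P.input) ⬝ᵥ (ξ - ξbar) := by
  have hflow : 1 ⬝ᵥ (P.incidence *ᵥ (P.lineFlow η - P.lineFlow ηbar)) = 0 := by
    rw [dotProduct_mulVec, hB, zero_dotProduct]
  rw [← one_dotProduct, h.imbalance_eq, dotProduct_add, dotProduct_sub, hflow, ← dotProduct_mulVec]
  simp [one_dotProduct]

variable (P)

/-- The vector field of the distributed controller. -/
noncomputable def controller (ω : n → ℝ) (ξ : c → ℝ) : c → ℝ :=
  -(P.comm.lapMatrix ℝ *ᵥ ξ) - P.inputᵀ *ᵥ ω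

/-- The rate at which the closed loop loses energy: `ωᵀ A ω + xᵀ L x` with `x = ξ - ξbar`. -/
noncomputable def dissipation (ξbar : c → ℝ) (ω : n → ℝ) (ξ : c → ℝ) : ℝ :=
  ∑ i, P.damping i * ω i ^ 2 + (ξ - ξbar) ⬝ᵥ (P.comm.lapMatrix ℝ *ᵥ (ξ - ξbar))

variable {P}

/-- The interconnections via `incidence` and `input` are power preserving, so only the damping and
the Laplacian survive. -/
theorem IsEquilibrium.power_balance (h : P.IsEquilibrium ηbar ξbar) (ω : n → ℝ) (η : m → ℝ)
    (ξ : c → ℝ) :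
    ω ⬝ᵥ P.imbalance ω η ξ + (P.lineFlow η - P.lineFlow ηbar) ⬝ᵥ (P.incidenceᵀ *ᵥ ω)
      + (ξ - ξbar) ⬝ᵥ P.controller ω ξ = -P.dissipation ξbar ω ξ := by
  have hlap : P.comm.lapMatrix ℝ *ᵥ ξ = P.comm.lapMatrix ℝ *ᵥ (ξ - ξbar) := by
    rw [mulVec_sub, h.lapMatrix_mulVec_eq_zero, sub_zero]
  have hdamp : ω ⬝ᵥ (P.damping * ω) = ∑ i, P.damping i * ω i ^ 2 :=
    Finset.sum_congr rfl fun i _ => by rw [Pi.mul_apply]; ring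
  rw [h.imbalance_eq, controller, dissipation, hlap, ← hdamp]
  simp only [dotProduct_add, dotProduct_sub, dotProduct_neg, dotProduct_transpose_mulVec]
  ring

section DissipationBounds

omit [Fintype m]

variable (hA : ∀ i, 0 ≤ P.damping i) (ω : n → ℝ) (ξ : c → ℝ)
include hA

theorem damping_mul_sq_le_dissipation (i : n) :
    P.damping i * ω i ^ 2 ≤ P.dissipation ξbar ω ξ :=
  (Finset.single_le_sum (f := fun i => P.damping i * ω i ^ 2)
    (fun i _ => mul_nonneg (hA i) (sq_nonneg _)) (Finset.mem_univ i)).trans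
    (le_add_of_nonneg_right (dotProduct_lapMatrix_mulVec_nonneg _))

theorem dotProduct_lapMatrix_mulVec_le_dissipation :
    (ξ - ξbar) ⬝ᵥ (P.comm.lapMatrix ℝ *ᵥ (ξ - ξbar)) ≤ P.dissipation ξbar ω ξ :=
  le_add_of_nonneg_left <| Finset.sum_nonneg fun i _ => mul_nonneg (hA i) (sq_nonneg _)

theorem dissipation_nonneg : 0 ≤ P.dissipation ξbar ω ξ :=
  (dotProduct_lapMatrix_mulVec_nonneg _).trans
    (dotProduct_lapMatrix_mulVec_le_dissipation hA ω ξ)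

end DissipationBounds

/-- Closed-loop solutions on `[0, ∞)`. Differentiating the momentum `inertia * ω` instead of `ω`
makes `momentum` the algebraic constraint `0 = imbalanceᵢ` at buses without inertia. -/
structure IsSolution (P : Microgrid n m c) [DecidableRel P.comm.Adj] (ω : ℝ → n → ℝ)
    (η : ℝ → m → ℝ) (ξ : ℝ → c → ℝ) : Prop where
  angle : ∀ t ∈ Ici (0 : ℝ), HasDerivWithinAt η (P.incidenceᵀ *ᵥ ω t) (Ici 0) t
  momentum : ∀ t ∈ Ici (0 : ℝ), HasDerivWithinAt (fun s => P.inertia * ω s)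
    (P.imbalance (ω t) (η t) (ξ t)) (Ici 0) t
  control : ∀ t ∈ Ici (0 : ℝ), HasDerivWithinAt ξ (P.controller (ω t) (ξ t)) (Ici 0) t

/-- The frequencies as a function of the momenta `p`, the angles and the controller states: at a bus
without inertia the algebraic constraint is solved for the frequency. -/
noncomputable def frequency (P : Microgrid n m c) (p : n → ℝ) (η : m → ℝ) (ξ : c → ℝ) : n → ℝ :=
  fun i => if P.inertia i = 0 then (P.damping i)⁻¹ * P.imbalance 0 η ξ i
    else (P.inertia i)⁻¹ * p i

omit [DecidableEq c] [Fintype n] in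
theorem continuous_frequency (P : Microgrid n m c) :
    Continuous fun y : (n → ℝ) × (m → ℝ) × (c → ℝ) => P.frequency y.1 y.2.1 y.2.2 := by
  refine continuous_pi fun i => ?_
  have himb : Continuous fun y : (n → ℝ) × (m → ℝ) × (c → ℝ) => P.imbalance 0 y.2.1 y.2.2 :=
    P.continuous_imbalance.comp (continuous_const.prodMk continuous_snd)
  unfold frequency
  split_ifs <;> fun_prop

/-- The right-hand side of the closed loop in the coordinates `(inertia * ω, η, ξ)`. -/
noncomputable def vectorField (P : Microgrid n m c) [DecidableRel P.comm.Adj]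
    (y : (n → ℝ) × (m → ℝ) × (c → ℝ)) : (n → ℝ) × (m → ℝ) × (c → ℝ) :=
  let ω := P.frequency y.1 y.2.1 y.2.2
  (P.imbalance ω y.2.1 y.2.2, P.incidenceᵀ *ᵥ ω, P.controller ω y.2.2)

theorem continuous_vectorField (P : Microgrid n m c) [DecidableRel P.comm.Adj] :
    Continuous P.vectorField := by
  have hω := P.continuous_frequency
  refine (P.continuous_imbalance.comp (hω.prodMk continuous_snd)).prodMk ?_
  unfold controller
  fun_prop

namespace IsSolution

variable {ω : ℝ → n → ℝ} {η : ℝ → m → ℝ} {ξ : ℝ → c → ℝ}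

section Energy

variable (h : P.IsSolution ω η ξ) (he : P.IsEquilibrium ηbar ξbar)
include h he

theorem hasDerivWithinAt_energy {t : ℝ} (ht : t ∈ Ici (0 : ℝ)) :
    HasDerivWithinAt (fun s => P.energy ηbar ξbar (ω s) (η s) (ξ s))
      (-P.dissipation ξbar (ω t) (ξ t)) (Ici 0) t := by
  have hkin : HasDerivWithinAt (fun s => ∑ i, P.inertia i * ω s i ^ 2 / 2)
      (ω t ⬝ᵥ P.imbalance (ω t) (η t) (ξ t)) (Ici 0) t :=
    HasDerivWithinAt.fun_sum fun i _ => hasDerivWithinAt_mul_sq_div_two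
      (uniqueDiffOn_Ici 0 t ht) (hasDerivWithinAt_pi.1 (h.momentum t ht) i)
  have hctrl : HasDerivWithinAt (fun s => ∑ j, (ξ s j - ξbar j) ^ 2 / 2)
      ((ξ t - ξbar) ⬝ᵥ P.controller (ω t) (ξ t)) (Ici 0) t :=
    HasDerivWithinAt.fun_sum fun j _ => by
      refine ((((hasDerivWithinAt_pi.1 (h.control t ht) j).sub_const (ξbar j)).fun_pow 2).div_const
        2).congr_deriv ?_
      simp only [Nat.cast_ofNat, Nat.add_one_sub_one, pow_one, Pi.sub_apply]
      ring
  exact ((hkin.add (hasDerivWithinAt_potential ηbar (h.angle t ht))).add hctrl).congr_deriv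
    (he.power_balance _ _ _)

theorem antitoneOn_energy (hA : ∀ i, 0 ≤ P.damping i) :
    AntitoneOn (fun t => P.energy ηbar ξbar (ω t) (η t) (ξ t)) (Ici 0) :=
  antitoneOn_Ici_of_hasDerivWithinAt_neg (fun _ ht => h.hasDerivWithinAt_energy he ht)
    fun t _ => dissipation_nonneg hA (ω t) (ξ t)

/-- The energy cannot increase, so the angles cannot cross a sphere on which the potential exceeds
the initial energy. -/
theorem angle_mem_ball (hM : ∀ i, 0 ≤ P.inertia i) (hA : ∀ i, 0 ≤ P.damping i) {r e : ℝ}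
    (hsphere : ∀ η ∈ Metric.sphere ηbar r, e ≤ P.potential ηbar η)
    (h0 : η 0 ∈ Metric.ball ηbar r) (hlt : P.energy ηbar ξbar (ω 0) (η 0) (ξ 0) < e) {t : ℝ}
    (ht : t ∈ Ici (0 : ℝ)) : η t ∈ Metric.ball ηbar r := by
  refine mem_ball_of_isPreconnected_of_forall_notMem_sphere isPreconnected_Ici
    (fun s hs => (h.angle s hs).continuousWithinAt) self_mem_Ici h0 (fun s hs hmem => ?_) ht
  exact ((hsphere _ hmem).trans (potential_le_energy hM ηbar ξbar (ω s) (η s) (ξ s))).not_gt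
    ((h.antitoneOn_energy he hA self_mem_Ici hs hs).trans_lt hlt)

end Energy

theorem of_apply (hangle : ∀ t ∈ Ici (0 : ℝ), ∀ k,
      HasDerivWithinAt (fun s => η s k) ((P.incidenceᵀ *ᵥ ω t) k) (Ici 0) t)
    (hinertia : ∀ t ∈ Ici (0 : ℝ), ∀ i, P.inertia i ≠ 0 → HasDerivWithinAt (fun s => ω s i)
      ((P.inertia i)⁻¹ * P.imbalance (ω t) (η t) (ξ t) i) (Ici 0) t)
    (halg : ∀ t ∈ Ici (0 : ℝ), ∀ i, P.inertia i = 0 → 0 = P.imbalance (ω t) (η t) (ξ t) i)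
    (hcontrol : ∀ t ∈ Ici (0 : ℝ), ∀ j,
      HasDerivWithinAt (fun s => ξ s j) (P.controller (ω t) (ξ t) j) (Ici 0) t) :
    P.IsSolution ω η ξ where
  angle t ht := hasDerivWithinAt_pi.2 (hangle t ht)
  momentum t ht := hasDerivWithinAt_pi.2 fun i => by
    simp only [Pi.mul_apply]
    rcases eq_or_ne (P.inertia i) 0 with hi | hi
    · simpa [hi, ← halg t ht i hi] using hasDerivWithinAt_const t (Ici 0) (0 : ℝ)
    · simpa [hi] using (hinertia t ht i hi).const_mul (P.inertia i)
  control t ht := hasDerivWithinAt_pi.2 (hcontrol t ht)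

theorem frequency_eq (h : P.IsSolution ω η ξ) (hA : ∀ i, 0 < P.damping i) {t : ℝ}
    (ht : t ∈ Ici (0 : ℝ)) : P.frequency (P.inertia * ω t) (η t) (ξ t) = ω t := by
  ext i
  have hAi := (hA i).ne'
  unfold frequency
  split_ifs with hi
  · have hconst : HasDerivWithinAt (fun _ => (0 : ℝ)) (P.imbalance (ω t) (η t) (ξ t) i) (Ici 0) t :=
      by simpa [hi] using hasDerivWithinAt_pi.1 (h.momentum t ht) i
    have hzero : P.imbalance (ω t) (η t) (ξ t) i = 0 :=
      (uniqueDiffOn_Ici 0 t ht).eq_deriv _ hconst (hasDerivWithinAt_const t _ 0)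
    rw [imbalance_apply_eq_add_imbalance_zero] at hzero
    field_simp
    linarith
  · simp [hi]

/-- Written in the momenta, the closed loop is an ordinary differential equation. -/
theorem hasDerivWithinAt_state (h : P.IsSolution ω η ξ) (hA : ∀ i, 0 < P.damping i) {t : ℝ}
    (ht : t ∈ Ici (0 : ℝ)) :
    HasDerivWithinAt (fun s => (P.inertia * ω s, η s, ξ s))
      (P.vectorField (P.inertia * ω t, η t, ξ t)) (Ici 0) t := by
  simpa only [vectorField, h.frequency_eq hA ht] using
    (h.momentum t ht).prodMk ((h.angle t ht).prodMk (h.control t ht))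

section Convergence

variable (h : P.IsSolution ω η ξ) (he : P.IsEquilibrium ηbar ξbar) (hΓ : ∀ k, 0 < P.lineGain k)
  (hM : ∀ i, 0 ≤ P.inertia i) (hA : ∀ i, 0 < P.damping i)
  (hηbar : ∀ k, ηbar k ∈ Ioo (-(π / 2)) (π / 2))
  (hη : ∀ t ∈ Ici (0 : ℝ), ∀ k, η t k ∈ Ioo (-(π / 2)) (π / 2))
include h he hΓ hM hA hηbar hη

theorem isBounded_state :
    Bornology.IsBounded ((fun t => (P.inertia * ω t, η t, ξ t)) '' Ici 0) := by
  set E₀ := P.energy ηbar ξbar (ω 0) (η 0) (ξ 0)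
  refine (isCompact_Icc.isBounded (s := Icc
    (fun i => -√(P.inertia i * (2 * E₀)), fun _ => -(π / 2), fun j => ξbar j - √(2 * E₀))
    (fun i => √(P.inertia i * (2 * E₀)), fun _ => π / 2, fun j => ξbar j + √(2 * E₀)))).subset
    (image_subset_iff.2 fun t ht => ?_)
  have hpot := potential_nonneg hΓ hηbar (hη t ht)
  have hE : P.energy ηbar ξbar (ω t) (η t) (ξ t) ≤ E₀ :=
    h.antitoneOn_energy he (fun i => (hA i).le) self_mem_Ici ht ht
  have hp : ∀ i, |P.inertia i * ω t i| ≤ √(P.inertia i * (2 * E₀)) := fun i => by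
    refine Real.abs_le_sqrt ?_
    rw [mul_pow, pow_two, mul_assoc]
    exact mul_le_mul_of_nonneg_left
      ((inertia_mul_sq_le_energy hM _ ξbar (ω t) (ξ t) hpot i).trans (by linarith)) (hM i)
  have hξ : ∀ j, |ξ t j - ξbar j| ≤ √(2 * E₀) := fun j =>
    Real.abs_le_sqrt ((sq_sub_le_energy hM _ _ (ω t) _ hpot j).trans (by linarith))
  exact ⟨⟨fun i => (abs_le.1 (hp i)).1, fun k => (hη t ht k).1.le,
      fun j => by linarith [(abs_le.1 (hξ j)).1]⟩,
    ⟨fun i => (abs_le.1 (hp i)).2, fun k => (hη t ht k).2.le,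
      fun j => by linarith [(abs_le.1 (hξ j)).2]⟩⟩

theorem uniformContinuousOn {F : Type*} [UniformSpace F]
    {g : (n → ℝ) × (m → ℝ) × (c → ℝ) → F} (hg : Continuous g) :
    UniformContinuousOn (fun t => g (ω t, η t, ξ t)) (Ici 0) := by
  have hstate : Continuous fun y : (n → ℝ) × (m → ℝ) × (c → ℝ) =>
      (P.frequency y.1 y.2.1 y.2.2, y.2.1, y.2.2) :=
    P.continuous_frequency.prodMk continuous_snd
  refine (uniformContinuousOn_comp_of_hasDerivWithinAt P.continuous_vectorField (hg.comp hstate)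
    (fun t ht => h.hasDerivWithinAt_state hA ht)
    (h.isBounded_state he hΓ hM hA hηbar hη)).congr fun t ht => ?_
  simp [h.frequency_eq hA ht]

theorem tendsto_dissipation :
    Tendsto (fun t => P.dissipation ξbar (ω t) (ξ t)) atTop (𝓝 0) := by
  refine tendsto_zero_of_hasDerivWithinAt_neg_of_bddBelow
    (fun t ht => h.hasDerivWithinAt_energy he ht)
    (fun t _ => dissipation_nonneg (fun i => (hA i).le) (ω t) (ξ t))
    (h.uniformContinuousOn he hΓ hM hA hηbar hη
      (g := fun z => P.dissipation ξbar z.1 z.2.2) (by unfold dissipation; fun_prop))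
    ⟨0, forall_mem_image.2 fun t ht => ?_⟩
  exact (potential_nonneg hΓ hηbar (hη t ht)).trans (potential_le_energy hM _ _ _ _ _)

theorem tendsto_frequency : Tendsto ω atTop (𝓝 0) := by
  refine tendsto_pi_nhds.2 fun i => tendsto_zero_of_sq_tendsto_zero ?_
  have hdamp : Tendsto (fun t => P.damping i * ω t i ^ 2) atTop (𝓝 0) :=
    squeeze_zero (fun t => mul_nonneg (hA i).le (sq_nonneg _))
      (fun t => damping_mul_sq_le_dissipation (fun i => (hA i).le) (ω t) (ξ t) i)
      (h.tendsto_dissipation he hΓ hM hA hηbar hη)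
  simpa [(hA i).ne'] using hdamp.const_mul (P.damping i)⁻¹

theorem tendsto_imbalance :
    Tendsto (fun t => P.imbalance (ω t) (η t) (ξ t)) atTop (𝓝 0) :=
  tendsto_zero_of_hasDerivWithinAt_of_uniformContinuousOn h.momentum
    (h.uniformContinuousOn he hΓ hM hA hηbar hη P.continuous_imbalance)
    ((h.tendsto_frequency he hΓ hM hA hηbar hη).const_mul P.inertia)

theorem tendsto_control (hB : 1 ᵥ* P.incidence = 0) (hC : ∑ j, (1 ᵥ* P.input) j ≠ 0)
    (hG : P.comm.Preconnected) : Tendsto ξ atTop (𝓝 ξbar) := by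
  have hagree := tendsto_sub_of_tendsto_dotProduct_lapMatrix_mulVec hG <|
    squeeze_zero (fun t => dotProduct_lapMatrix_mulVec_nonneg _)
      (fun t => dotProduct_lapMatrix_mulVec_le_dissipation (ξbar := ξbar)
        (fun i => (hA i).le) (ω t) (ξ t)) (h.tendsto_dissipation he hΓ hM hA hηbar hη)
  have hω := tendsto_pi_nhds.1 (h.tendsto_frequency he hΓ hM hA hηbar hη)
  have himb := tendsto_pi_nhds.1 (h.tendsto_imbalance he hΓ hM hA hηbar hη)
  have hdot : Tendsto (fun t => (1 ᵥ* P.input) ⬝ᵥ (ξ t - ξbar)) atTop (𝓝 0) := by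
    have hsum : Tendsto (fun t => ∑ i, (P.imbalance (ω t) (η t) (ξ t) i + P.damping i * ω t i))
        atTop (𝓝 0) := by
      simpa using tendsto_finsetSum Finset.univ fun i _ =>
        (himb i).add ((hω i).const_mul (P.damping i))
    refine hsum.congr fun t => ?_
    rw [Finset.sum_add_distrib, he.sum_imbalance hB]
    ring
  simpa using (tendsto_zero_of_tendsto_sub_of_tendsto_dotProduct hC hagree hdot).add_const ξbar

end Convergence

end IsSolution

end Dynamics

end Microgrid

theorem microgrid_failures_zero_frequency_optimal_dispatch_general {n m c : Type*} [Fintype n]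
    [Fintype m] [Fintype c] [DecidableEq c] (P : Microgrid n m c) [DecidableRel P.comm.Adj]
    (hB : 1 ᵥ* P.incidence = 0) (hΓ : ∀ k, 0 < P.lineGain k) (hM : ∀ i, 0 ≤ P.inertia i)
    (hA : ∀ i, 0 < P.damping i) (hC : ∑ j, (1 ᵥ* P.input) j ≠ 0) (hG : P.comm.Preconnected)
    {ηbar : m → ℝ} (hηbar : ∀ k, ηbar k ∈ Ioo (-(π / 2)) (π / 2)) {ξbar : c → ℝ}
    (he : P.IsEquilibrium ηbar ξbar) :
    ∃ U : Set ((n → ℝ) × (m → ℝ) × (c → ℝ)), IsOpen U ∧ (0, ηbar, ξbar) ∈ U ∧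
      ∀ ω η ξ, P.IsSolution ω η ξ → (ω 0, η 0, ξ 0) ∈ U →
        Tendsto ω atTop (𝓝 0) ∧ Tendsto ξ atTop (𝓝 ξbar) := by
  obtain ⟨r, hr, e, hepos, hbox, hsphere⟩ := Microgrid.exists_potential_barrier hΓ hηbar
  refine ⟨{z | z.2.1 ∈ Metric.ball ηbar r} ∩ {z | P.energy ηbar ξbar z.1 z.2.1 z.2.2 < e},
    (Metric.isOpen_ball.preimage (by fun_prop)).inter
      (isOpen_lt (P.continuous_energy ηbar ξbar) continuous_const),
    ⟨Metric.mem_ball_self hr, (P.energy_self ηbar ξbar).trans_lt hepos⟩,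
    fun ω η ξ h h0 => ?_⟩
  have hη : ∀ t ∈ Ici (0 : ℝ), ∀ k, η t k ∈ Ioo (-(π / 2)) (π / 2) := fun t ht =>
    hbox _ (h.angle_mem_ball he hM (fun i => (hA i).le) hsphere h0.1 h0.2 ht)
  exact ⟨h.tendsto_frequency he hΓ hM hA hηbar hη,
    h.tendsto_control he hΓ hM hA hηbar hη hB hC hG⟩

section DispatchInput

variable {n : Type*} [DecidableEq n] {S : Finset n} (q : {i // i ∈ S} → ℝ)

/-- The input matrix of controllers sitting at the buses of `S`, with `u i = (q i)⁻¹ * ξ i` there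
and no input elsewhere. -/
noncomputable def dispatchInput : Matrix n {i // i ∈ S} ℝ :=
  of fun i j => if i = j.1 then (q j)⁻¹ else 0

theorem dispatchInput_mulVec_of_mem (ξ : {i // i ∈ S} → ℝ) (j : {i // i ∈ S}) :
    (dispatchInput q *ᵥ ξ) j = (q j)⁻¹ * ξ j := by
  simp [dispatchInput, mulVec, dotProduct]

theorem dispatchInput_mulVec_of_notMem (ξ : {i // i ∈ S} → ℝ) {i : n} (hi : i ∉ S) :
    (dispatchInput q *ᵥ ξ) i = 0 :=
  Finset.sum_eq_zero fun j _ => by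
    simp [dispatchInput, show i ≠ j.1 from fun h => hi (h ▸ j.2)]

theorem vecMul_dispatchInput_apply [Fintype n] (ω : n → ℝ) (j : {i // i ∈ S}) :
    (ω ᵥ* dispatchInput q) j = (q j)⁻¹ * ω j := by
  simp [vecMul, dotProduct, dispatchInput, mul_comm]

theorem sum_vecMul_dispatchInput_pos [Fintype n] [Nonempty {i // i ∈ S}] (hq : ∀ j, 0 < q j) :
    0 < ∑ j, (1 ᵥ* dispatchInput q) j := by
  simpa [vecMul_dispatchInput_apply] using
    Finset.sum_pos (fun j _ => inv_pos.2 (hq j)) Finset.univ_nonempty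

end DispatchInput

section DispatchMicrogrid

variable {n m : Type*} [DecidableEq n] (B : Matrix n m ℝ) (Γ : m → ℝ) (VG : Finset n)
  (Miner A δ : n → ℝ) {S : Finset n} (q : {i // i ∈ S} → ℝ) (Gc : SimpleGraph {i // i ∈ S})

/-- The microgrid with generators `VG` and controllers at the buses of `S`; a failed generator is a
bus of `VG` outside `S`. An `abbrev`, so that a `DecidableRel` instance for `Gc` applies. -/
noncomputable abbrev dispatchMicrogrid : Microgrid n m {i // i ∈ S} where
  incidence := B
  lineGain := Γ
  inertia i := if i ∈ VG then Miner i else 0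
  damping := A
  load := δ
  input := dispatchInput q
  comm := Gc

namespace dispatchMicrogrid

variable {B Γ VG Miner A δ q Gc}

theorem inertia_nonneg (hMiner : ∀ i ∈ VG, 0 ≤ Miner i) (i : n) :
    0 ≤ (dispatchMicrogrid B Γ VG Miner A δ q Gc).inertia i := by
  dsimp only
  split_ifs with hi
  exacts [hMiner i hi, le_rfl]

section Imbalance

variable [Fintype m]

theorem imbalance_of_mem (ω : n → ℝ) (η : m → ℝ) (ξ : {i // i ∈ S} → ℝ) (j : {i // i ∈ S}) :
    (dispatchMicrogrid B Γ VG Miner A δ q Gc).imbalance ω η ξ j =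
      -A j * ω j - (∑ k, B j k * (Γ k * sin (η k))) + (q j)⁻¹ * ξ j + δ j := by
  simp only [Microgrid.imbalance, Pi.add_apply, Pi.sub_apply, Pi.neg_apply, Pi.mul_apply,
    dispatchInput_mulVec_of_mem, neg_mul]
  rfl

theorem imbalance_of_notMem (ω : n → ℝ) (η : m → ℝ) (ξ : {i // i ∈ S} → ℝ) {i : n} (hi : i ∉ S) :
    (dispatchMicrogrid B Γ VG Miner A δ q Gc).imbalance ω η ξ i =
      -A i * ω i - (∑ k, B i k * (Γ k * sin (η k))) + δ i := by
  simp only [Microgrid.imbalance, Pi.add_apply, Pi.sub_apply, Pi.neg_apply, Pi.mul_apply,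
    dispatchInput_mulVec_of_notMem q ξ hi, neg_mul, add_zero]
  rfl

end Imbalance

variable [DecidableRel Gc.Adj]

theorem isEquilibrium [Fintype m] {ηbar : m → ℝ} {r : ℝ}
    (hmem : ∀ j : {i // i ∈ S}, 0 = -(∑ k, B j k * (Γ k * sin (ηbar k))) + (q j)⁻¹ * r + δ j)
    (hnotMem : ∀ i ∉ S, 0 = -(∑ k, B i k * (Γ k * sin (ηbar k))) + δ i) :
    (dispatchMicrogrid B Γ VG Miner A δ q Gc).IsEquilibrium ηbar fun _ => r where
  imbalance_eq_zero := by
    ext i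
    by_cases hi : i ∈ S
    · simpa [imbalance_of_mem 0 ηbar _ ⟨i, hi⟩] using (hmem ⟨i, hi⟩).symm
    · simpa [imbalance_of_notMem 0 ηbar _ hi] using (hnotMem i hi).symm
  lapMatrix_mulVec_eq_zero := lapMatrix_mulVec_const Gc r

variable [Fintype n]

theorem controller_apply (ω : n → ℝ) (ξ : {i // i ∈ S} → ℝ) (j : {i // i ∈ S}) :
    (dispatchMicrogrid B Γ VG Miner A δ q Gc).controller ω ξ j =
      (∑ l, if Gc.Adj j l then ξ l - ξ j else 0) - (q j)⁻¹ * ω j := by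
  rw [← neg_lapMatrix_mulVec_apply, ← vecMul_dispatchInput_apply, ← mulVec_transpose]
  rfl

theorem isSolution [Fintype m] {VI VL VF : Finset n} (hpart : VG ∪ VI ∪ VL = Finset.univ)
    (hGI : Disjoint VG VI) (hMiner : ∀ i ∈ VG, Miner i ≠ 0)
    {q : {i // i ∈ (VG \ VF) ∪ VI} → ℝ} {Gc : SimpleGraph {i // i ∈ (VG \ VF) ∪ VI}}
    [DecidableRel Gc.Adj] {ω : ℝ → n → ℝ} {η : ℝ → m → ℝ} {ξ : ℝ → {i // i ∈ (VG \ VF) ∪ VI} → ℝ}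
    (hangle : ∀ t ∈ Ici (0 : ℝ), ∀ k,
      HasDerivWithinAt (fun s => η s k) (∑ i, B i k * ω t i) (Ici 0) t)
    (hhealthy : ∀ t ∈ Ici (0 : ℝ), ∀ i, ∀ hi : i ∈ VG \ VF,
      HasDerivWithinAt (fun s => ω s i) ((Miner i)⁻¹ * (-A i * ω t i
        - (∑ k, B i k * (Γ k * sin (η t k))) + (q ⟨i, Finset.mem_union_left _ hi⟩)⁻¹ *
          ξ t ⟨i, Finset.mem_union_left _ hi⟩ + δ i)) (Ici 0) t)
    (hfailed : ∀ t ∈ Ici (0 : ℝ), ∀ i ∈ VF,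
      HasDerivWithinAt (fun s => ω s i) ((Miner i)⁻¹ * (-A i * ω t i
        - (∑ k, B i k * (Γ k * sin (η t k))) + δ i)) (Ici 0) t)
    (hinverter : ∀ t ∈ Ici (0 : ℝ), ∀ i, ∀ hi : i ∈ VI,
      0 = -A i * ω t i - (∑ k, B i k * (Γ k * sin (η t k)))
        + (q ⟨i, Finset.mem_union_right _ hi⟩)⁻¹ * ξ t ⟨i, Finset.mem_union_right _ hi⟩ + δ i)
    (hload : ∀ t ∈ Ici (0 : ℝ), ∀ i ∈ VL,
      0 = -A i * ω t i - (∑ k, B i k * (Γ k * sin (η t k))) + δ i)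
    (hcontrol : ∀ t ∈ Ici (0 : ℝ), ∀ j, HasDerivWithinAt (fun s => ξ s j)
      ((∑ l, if Gc.Adj j l then ξ t l - ξ t j else 0) - (q j)⁻¹ * ω t j) (Ici 0) t) :
    (dispatchMicrogrid B Γ VG Miner A δ q Gc).IsSolution ω η ξ := by
  refine .of_apply hangle (fun t ht i hi => ?_) (fun t ht i hi => ?_) (fun t ht j => ?_)
  · have hG : i ∈ VG := of_not_not fun h => hi (if_neg h)
    rw [show (dispatchMicrogrid B Γ VG Miner A δ q Gc).inertia i = Miner i from if_pos hG]
    by_cases hF : i ∈ VF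
    · rw [imbalance_of_notMem _ _ _ (by simp [hF, Finset.disjoint_left.1 hGI hG])]
      exact hfailed t ht i hF
    · have hGF : i ∈ VG \ VF := Finset.mem_sdiff.2 ⟨hG, hF⟩
      rw [imbalance_of_mem _ _ _ ⟨i, Finset.mem_union_left _ hGF⟩]
      exact hhealthy t ht i hGF
  · have hG : i ∉ VG := fun h => hMiner i h ((if_pos h).symm.trans hi)
    by_cases hI : i ∈ VI
    · rw [imbalance_of_mem _ _ _ ⟨i, Finset.mem_union_right _ hI⟩]
      exact hinverter t ht i hI
    · rw [imbalance_of_notMem _ _ _ (by simp [hG, hI])]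
      exact hload t ht i (by simpa [hG, hI] using hpart.ge (Finset.mem_univ i))
  · rw [controller_apply]
    exact hcontrol t ht j

end dispatchMicrogrid

end DispatchMicrogrid

theorem mem_union_of_notMem_sdiff_union {n : Type*} [Fintype n] [DecidableEq n]
    {VG VI VL VF : Finset n} (hpart : VG ∪ VI ∪ VL = Finset.univ) {i : n}
    (hi : i ∉ (VG \ VF) ∪ VI) : i ∈ VF ∪ VL := by
  have hmem := hpart.ge (Finset.mem_univ i)
  simp only [Finset.mem_union, Finset.mem_sdiff] at hi hmem ⊢
  tauto

/-- microgrid output agreement with optimal dispatch under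
generator failures.  A proper subset `V_F ⊊ V_G` of generators has its input
frozen (absorbed into `δ_i`); with `V_c = (V_G ∖ V_F) ∪ V_I`, under the
modified feasibility condition, the distributed controller
`ξ̇_i = Σ_{{i,j}∈E_c}(ξ_j − ξ_i) − q_i⁻¹ω_i`, `u_i = q_i⁻¹ξ_i` on `V_c`
locally achieves `ω_i(t) → 0` at every bus and `u_i(t) → ū_i = q_i⁻¹λ`. -/
theorem microgrid_failures_zero_frequency_optimal_dispatch
    {N M : ℕ} (hN : 0 < N) (hM : 0 < M)
    (B : Matrix (Fin N) (Fin M) ℝ)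
    (hB1 : ∀ k, ∑ i, B i k = 0)
    (hBker : LinearMap.ker (Matrix.mulVecLin Bᵀ) =
      Submodule.span ℝ {(fun _ => (1 : ℝ) : Fin N → ℝ)})
    -- partition of the buses into generators, inverters and loads:
    (VG VI VL : Finset (Fin N))
    (hpart : VG ∪ VI ∪ VL = Finset.univ)
    (hGI : Disjoint VG VI) (hGL : Disjoint VG VL) (hIL : Disjoint VI VL)
    -- the failed generators, a proper subset of V_G:
    (VF : Finset (Fin N)) (hVFsub : VF ⊆ VG) (hVFne : VF ≠ VG)
    -- line coefficients, inertias, damping coefficients, loads: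
    (Γ : Fin M → ℝ) (hΓ : ∀ k, 0 < Γ k)
    (Miner : Fin N → ℝ) (hMiner : ∀ i ∈ VG, 0 < Miner i)
    (A : Fin N → ℝ) (hA : ∀ i, 0 < A i)
    (δ : Fin N → ℝ)
    -- cost weights on the controlled buses V_c = (V_G \ V_F) ∪ V_I:
    (q : {i // i ∈ (VG \ VF) ∪ VI} → ℝ) (hq : ∀ i, 0 < q i)
    -- the optimal multiplier λ and optimal inputs ū_i = q_i⁻¹ λ:
    (lam : ℝ)
    (hlam : lam = -(∑ i : {i // i ∈ (VG \ VF) ∪ VI}, (q i)⁻¹)⁻¹ * ∑ i, δ i)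
    -- the feasibility condition:
    (ηbar : Fin M → ℝ) (hηbar : ∀ k, ηbar k ∈ Ioo (-(π / 2)) (π / 2))
    (hfeasc : ∀ i : {i // i ∈ (VG \ VF) ∪ VI},
      0 = -(∑ k, B i.1 k * (Γ k * Real.sin (ηbar k))) + (q i)⁻¹ * lam + δ i.1)
    (hfeasu : ∀ i ∈ VF ∪ VL,
      0 = -(∑ k, B i k * (Γ k * Real.sin (ηbar k))) + δ i)
    -- the connected undirected communication graph on V_c:
    (Gc : SimpleGraph {i // i ∈ (VG \ VF) ∪ VI}) [DecidableRel Gc.Adj]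
    (hGc : Gc.Connected) :
    ∃ U : Set ((Fin N → ℝ) × (Fin M → ℝ) × ({i // i ∈ (VG \ VF) ∪ VI} → ℝ)),
      IsOpen U ∧ ((fun _ => 0), ηbar, fun _ => lam) ∈ U ∧
      ∀ (ω : ℝ → Fin N → ℝ) (η : ℝ → Fin M → ℝ)
        (ξ : ℝ → {i // i ∈ (VG \ VF) ∪ VI} → ℝ),
        -- (ω, η, ξ) is a closed-loop solution on [0, ∞):
        ContinuousOn (fun t => (ω t, η t, ξ t)) (Ici 0) →
        (∀ t ∈ Ici (0 : ℝ), ∀ k,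
          HasDerivWithinAt (fun s => η s k) (∑ i, B i k * ω t i) (Ici 0) t) →
        -- healthy synchronous generators (with u_i = q_i⁻¹ ξ_i):
        (∀ t ∈ Ici (0 : ℝ), ∀ i, ∀ hi : i ∈ VG \ VF,
          HasDerivWithinAt (fun s => ω s i)
            ((Miner i)⁻¹ * (-(A i) * ω t i
              - (∑ k, B i k * (Γ k * Real.sin (η t k)))
              + (q ⟨i, Finset.mem_union_left _ hi⟩)⁻¹ *
                  ξ t ⟨i, Finset.mem_union_left _ hi⟩ + δ i)) (Ici 0) t) →
        -- failed generators (input frozen, absorbed into δ_i):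
        (∀ t ∈ Ici (0 : ℝ), ∀ i ∈ VF,
          HasDerivWithinAt (fun s => ω s i)
            ((Miner i)⁻¹ * (-(A i) * ω t i
              - (∑ k, B i k * (Γ k * Real.sin (η t k))) + δ i)) (Ici 0) t) →
        -- droop-controlled inverters:
        (∀ t ∈ Ici (0 : ℝ), ∀ i, ∀ hi : i ∈ VI,
          0 = -(A i) * ω t i - (∑ k, B i k * (Γ k * Real.sin (η t k)))
            + (q ⟨i, Finset.mem_union_right _ hi⟩)⁻¹ *
                ξ t ⟨i, Finset.mem_union_right _ hi⟩ + δ i) →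
        -- frequency-dependent loads:
        (∀ t ∈ Ici (0 : ℝ), ∀ i ∈ VL,
          0 = -(A i) * ω t i - (∑ k, B i k * (Γ k * Real.sin (η t k))) + δ i) →
        -- the distributed controller:
        (∀ t ∈ Ici (0 : ℝ), ∀ i : {i // i ∈ (VG \ VF) ∪ VI},
          HasDerivWithinAt (fun s => ξ s i)
            ((∑ j, if Gc.Adj i j then ξ t j - ξ t i else 0)
              - (q i)⁻¹ * ω t i.1) (Ici 0) t) →
        -- starting in U:
        (ω 0, η 0, ξ 0) ∈ U →
        -- zero frequency deviation and optimal dispatch in the limit: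
        (∀ i, Tendsto (fun t => ω t i) atTop (𝓝 0)) ∧
        (∀ i : {i // i ∈ (VG \ VF) ∪ VI},
          Tendsto (fun t => (q i)⁻¹ * ξ t i) atTop (𝓝 ((q i)⁻¹ * lam))) := by
  have : Nonempty {i // i ∈ (VG \ VF) ∪ VI} := hGc.nonempty
  obtain ⟨U, hU, hmem, hconv⟩ := microgrid_failures_zero_frequency_optimal_dispatch_general
    (dispatchMicrogrid B Γ VG Miner A δ q Gc) (by ext k; simp [vecMul, dotProduct, hB1]) hΓ
    (dispatchMicrogrid.inertia_nonneg fun i hi => (hMiner i hi).le) hA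
    (sum_vecMul_dispatchInput_pos q hq).ne' hGc.preconnected hηbar
    (dispatchMicrogrid.isEquilibrium hfeasc fun i hi =>
      hfeasu i (mem_union_of_notMem_sdiff_union hpart hi))
  refine ⟨U, hU, hmem, fun ω η ξ _ hangle hhealthy hfailed hinverter hload hcontrol h0 => ?_⟩
  obtain ⟨hω, hξ⟩ := hconv ω η ξ (dispatchMicrogrid.isSolution hpart hGI
    (fun i hi => (hMiner i hi).ne') hangle hhealthy hfailed hinverter hload hcontrol) h0
  exact ⟨tendsto_pi_nhds.1 hω, fun i => (tendsto_pi_nhds.1 hξ i).const_mul _⟩
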